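/- arXiv:2305.12942 — 4 statements merged into one kernel-verified Lean document; each statement's English description precedes it below -/
import Mathlib

section
/- Let p be a prime number. (1) If p = 2, then Γ(ℤ_{p²}) has only one vertex and is not partitionable into global defensive alliances. (2) If p ≠ 2, then Γ(ℤ_{p²}) is partitionable into global defensive alliances and ψ_g(Γ(ℤ_{p²})) = 2. -/
open Classical

/-- The set of zero-divisors of `R` (including `0`). -/
def zeroDivisorSet (R : Type*) [CommRing R] : Set R :=
  {x : R | ∃ y : R, y ≠ 0 ∧ x * y = 0}

/-- Vertices of the zero-divisor graph: the nonzero zero-divisors of `R`. -/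
abbrev ZDV (R : Type*) [CommRing R] : Type _ :=
  {x : R // x ≠ 0 ∧ ∃ y : R, y ≠ 0 ∧ x * y = 0}

/-- The zero-divisor graph `Γ(R)` of a commutative ring `R`: vertices are the nonzero
zero-divisors, and distinct vertices `x`, `y` are adjacent iff `x * y = 0`. -/
def zdGraph (R : Type*) [CommRing R] : SimpleGraph (ZDV R) where
  Adj a b := a ≠ b ∧ (a : R) * (b : R) = 0
  symm := by
    constructor
    intro a b h
    exact ⟨h.1.symm, by rw [mul_comm]; exact h.2⟩
  loopless := by
    constructor
    intro a h
    exact h.1 rfl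

/-- `degIn G S v` is the number of neighbors of `v` lying in `S`. -/
noncomputable def degIn {V : Type*} (G : SimpleGraph V) (S : Set V) (v : V) : ℕ :=
  Set.ncard {u : V | u ∈ S ∧ G.Adj v u}

/-- `S` is a dominating set: every vertex outside `S` has a neighbor in `S`. -/
def IsDominatingSet {V : Type*} (G : SimpleGraph V) (S : Set V) : Prop :=
  ∀ v ∉ S, ∃ u ∈ S, G.Adj v u

/-- `S` is a defensive alliance: `S` is nonempty and every `v ∈ S` satisfies
`deg_S(v) + 1 ≥ deg_{Sᶜ}(v)`. -/
def IsDefensiveAlliance {V : Type*} (G : SimpleGraph V) (S : Set V) : Prop :=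
  S.Nonempty ∧ ∀ v ∈ S, degIn G Sᶜ v ≤ degIn G S v + 1

/-- A global defensive alliance is a defensive alliance that is also a dominating set. -/
def IsGlobalDefensiveAlliance {V : Type*} (G : SimpleGraph V) (S : Set V) : Prop :=
  IsDefensiveAlliance G S ∧ IsDominatingSet G S

/-- `P` is a partition of the vertex set of `G` into global defensive alliances. -/
def IsGDAPartition {V : Type*} (G : SimpleGraph V) (P : Finset (Set V)) : Prop :=
  (∀ S ∈ P, IsGlobalDefensiveAlliance G S) ∧
  (⋃₀ (P : Set (Set V)) = Set.univ) ∧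
  ((P : Set (Set V)).Pairwise Disjoint)

/-- The global defensive alliance partition number `ψ_g(G)`: the maximum number of parts in
a partition of the vertex set into global defensive alliances. -/
noncomputable def psiG {V : Type*} (G : SimpleGraph V) : ℕ :=
  sSup {n : ℕ | ∃ P : Finset (Set V), IsGDAPartition G P ∧ P.card = n}

/-- `G` is partitionable into global defensive alliances iff `ψ_g(G) ≥ 2`. -/
def PartitionableGDA {V : Type*} (G : SimpleGraph V) : Prop :=
  2 ≤ psiG G

/-- The global defensive alliance number `γ_a(G)`: the minimum cardinality of a global
defensive alliance. -/
noncomputable def gammaA {V : Type*} (G : SimpleGraph V) : ℕ :=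
  sInf {n : ℕ | ∃ S : Set V, IsGlobalDefensiveAlliance G S ∧ S.ncard = n}

/-!
The product of any two zero-divisors of `ℤ_{p²}` vanishes, because both are multiples of `p`; so
`Γ(ℤ_{p²})` is complete, and it has `p - 1` vertices. In a complete graph on `n ≥ 1` vertices, a set
`S` is a global defensive alliance iff it is nonempty and contains at least half of the vertices.
Hence a partition into such sets has at most two parts, and it has two of them only if both
contain exactly `n / 2` vertices, which is possible iff `n` is even.
-/

section Partition

variable {V : Type*} {G : SimpleGraph V}

theorem IsGDAPartition.sum_ncard [Finite V] {P : Finset (Set V)} (hP : IsGDAPartition G P) :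
    ∑ S ∈ P, S.ncard = Nat.card V := by
  obtain ⟨-, hcover, hdisj⟩ := hP
  have hunion := P.finite_toSet.ncard_biUnion (s := id) (fun S _ => S.toFinite) hdisj
  simp only [id_eq] at hunion
  rwa [← Set.sUnion_eq_biUnion, hcover, Set.ncard_univ, finsum_mem_coe_finset, eq_comm] at hunion

theorem isGDAPartition_pair_compl {S : Set V} (hS : IsGlobalDefensiveAlliance G S)
    (hSc : IsGlobalDefensiveAlliance G Sᶜ) : IsGDAPartition G {S, Sᶜ} := by
  refine ⟨by simp [hS, hSc], by simp, ?_⟩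
  rw [Finset.coe_pair, Set.pairwise_pair]
  exact fun _ => ⟨disjoint_compl_right, disjoint_compl_left⟩

theorem lt_psiG_iff [Finite V] {n : ℕ} :
    n < psiG G ↔ ∃ P : Finset (Set V), IsGDAPartition G P ∧ n < P.card := by
  have hbdd : BddAbove {n : ℕ | ∃ P : Finset (Set V), IsGDAPartition G P ∧ P.card = n} :=
    ({P : Finset (Set V) | IsGDAPartition G P}.toFinite.image Finset.card).bddAbove
  simp only [psiG, lt_csSup_iff' hbdd, Set.mem_ofPred_eq, exists_exists_and_eq_and]

end Partition

section CompleteGraph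

variable {V : Type*}

theorem degIn_top (S : Set V) (v : V) : degIn ⊤ S v = (S \ {v}).ncard := by
  simp only [degIn, SimpleGraph.top_adj, Set.sdiff_eq, Set.inter_def, Set.mem_compl_iff,
    Set.mem_singleton_iff, ne_comm, ne_eq]

theorem isDominatingSet_top {S : Set V} (hS : S.Nonempty) : IsDominatingSet ⊤ S := by
  obtain ⟨u, hu⟩ := hS
  exact fun v hv => ⟨u, hu, fun h => hv (h ▸ hu)⟩

variable [Finite V]

theorem degIn_top_compl_le_iff {S : Set V} {v : V} (hv : v ∈ S) :
    degIn ⊤ Sᶜ v ≤ degIn ⊤ S v + 1 ↔ Nat.card V ≤ 2 * S.ncard := by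
  have hsplit := Set.ncard_add_ncard_compl S
  rw [degIn_top, degIn_top, Set.sdiff_singleton_eq_self (Set.notMem_compl_iff.2 hv),
    Set.ncard_sdiff_singleton_add_one hv]
  omega

theorem isGlobalDefensiveAlliance_top_iff {S : Set V} :
    IsGlobalDefensiveAlliance ⊤ S ↔ S.Nonempty ∧ Nat.card V ≤ 2 * S.ncard := by
  constructor
  · rintro ⟨⟨⟨v, hv⟩, hdeg⟩, -⟩
    exact ⟨⟨v, hv⟩, (degIn_top_compl_le_iff hv).1 (hdeg v hv)⟩
  · rintro ⟨hS, hcard⟩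
    exact ⟨⟨hS, fun v hv => (degIn_top_compl_le_iff hv).2 hcard⟩, isDominatingSet_top hS⟩

theorem card_le_two_of_isGDAPartition_top [Nonempty V] {P : Finset (Set V)}
    (hP : IsGDAPartition (⊤ : SimpleGraph V) P) : P.card ≤ 2 := by
  have hpart : ∀ S ∈ P, Nat.card V ≤ 2 * S.ncard := fun S hS =>
    (isGlobalDefensiveAlliance_top_iff.1 (hP.1 S hS)).2
  have hle : P.card * Nat.card V ≤ 2 * Nat.card V :=
    calc P.card * Nat.card V ≤ ∑ S ∈ P, 2 * S.ncard := P.card_nsmul_le_sum _ _ hpart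
      _ = 2 * Nat.card V := by rw [← Finset.mul_sum, hP.sum_ncard]
  exact Nat.le_of_mul_le_mul_right hle Nat.card_pos

theorem even_card_of_isGDAPartition_top {P : Finset (Set V)}
    (hP : IsGDAPartition (⊤ : SimpleGraph V) P) (hcard : P.card = 2) : Even (Nat.card V) := by
  obtain ⟨A, B, hAB, rfl⟩ := Finset.card_eq_two.1 hcard
  have hsum : A.ncard + B.ncard = Nat.card V := by
    rw [← hP.sum_ncard, Finset.sum_pair hAB]
  have hA := (isGlobalDefensiveAlliance_top_iff.1 (hP.1 A (by simp))).2
  have hB := (isGlobalDefensiveAlliance_top_iff.1 (hP.1 B (by simp))).2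
  exact ⟨A.ncard, by omega⟩

variable [Nonempty V]

theorem exists_isGDAPartition_top_card_eq_two (hV : Even (Nat.card V)) :
    ∃ P : Finset (Set V), IsGDAPartition ⊤ P ∧ P.card = 2 := by
  obtain ⟨m, hm⟩ := hV
  have hm_pos : 0 < m := by have := Nat.card_pos (α := V); omega
  obtain ⟨S, -, hS⟩ := Set.exists_subset_card_eq (s := (Set.univ : Set V)) (n := m)
    (by rw [Set.ncard_univ]; omega)
  have hSc : Sᶜ.ncard = m := by have := Set.ncard_add_ncard_compl S; omega
  have halliance {T : Set V} (hT : T.ncard = m) : IsGlobalDefensiveAlliance ⊤ T :=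
    isGlobalDefensiveAlliance_top_iff.2 ⟨Set.nonempty_of_ncard_ne_zero (by omega), by omega⟩
  exact ⟨{S, Sᶜ}, isGDAPartition_pair_compl (halliance hS) (halliance hSc),
    Finset.card_pair ne_compl_self⟩

theorem psiG_top_le_two : psiG (⊤ : SimpleGraph V) ≤ 2 := by
  by_contra! hlt
  obtain ⟨P, hP, hcard⟩ := lt_psiG_iff.1 hlt
  exact hcard.not_ge (card_le_two_of_isGDAPartition_top hP)

theorem partitionableGDA_top_iff :
    PartitionableGDA (⊤ : SimpleGraph V) ↔ Even (Nat.card V) := by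
  rw [PartitionableGDA, Nat.succ_le_iff, lt_psiG_iff]
  constructor
  · rintro ⟨P, hP, hcard⟩
    exact even_card_of_isGDAPartition_top hP
      ((card_le_two_of_isGDAPartition_top hP).antisymm hcard)
  · intro hV
    obtain ⟨P, hP, hcard⟩ := exists_isGDAPartition_top_card_eq_two hV
    exact ⟨P, hP, by omega⟩

end CompleteGraph

section ZeroDivisors

variable {R : Type*} [CommRing R]

theorem zdGraph_eq_top
    (hmul : ∀ x ∈ zeroDivisorSet R, ∀ y ∈ zeroDivisorSet R, x * y = 0) : zdGraph R = ⊤ := by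
  ext a b
  exact ⟨And.left, fun hab => ⟨hab, hmul a a.2.2 b b.2.2⟩⟩

theorem card_zdv_add_one [Nontrivial R] (hZ : (zeroDivisorSet R).Finite) :
    Nat.card (ZDV R) + 1 = (zeroDivisorSet R).ncard := by
  have hzero : (0 : R) ∈ zeroDivisorSet R := ⟨1, one_ne_zero, zero_mul 1⟩
  have hvertices : {x : R | x ≠ 0 ∧ ∃ y : R, y ≠ 0 ∧ x * y = 0} = zeroDivisorSet R \ {0} :=
    Set.ext fun _ => and_comm
  rw [← Set.ncard_sdiff_singleton_add_one hzero hZ, ← hvertices]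
  rfl

theorem mem_zeroDivisorSet_iff_not_isUnit [Finite R] {x : R} :
    x ∈ zeroDivisorSet R ↔ ¬ IsUnit x := by
  rw [isUnit_iff_mem_nonZeroDivisors_of_finite, notMem_nonZeroDivisors_iff_left]
  exact exists_congr fun _ => and_comm

theorem ncard_zeroDivisorSet_add_card_units [Finite R] :
    (zeroDivisorSet R).ncard + Nat.card Rˣ = Nat.card R := by
  have hunits : (zeroDivisorSet R)ᶜ = Set.range ((↑) : Rˣ → R) := by
    ext x
    rw [Set.mem_compl_iff, mem_zeroDivisorSet_iff_not_isUnit, not_not]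
    rfl
  rw [← Set.ncard_add_ncard_compl (zeroDivisorSet R), hunits, ← Set.image_univ,
    Set.ncard_image_of_injective _ Units.val_injective, Set.ncard_univ]

end ZeroDivisors

section ZModPrimePow

variable {p : ℕ}

theorem natCast_dvd_of_not_isUnit_zmod_prime_pow (hp : p.Prime) {k : ℕ} {x : ZMod (p ^ k)}
    (hx : ¬ IsUnit x) : (p : ZMod (p ^ k)) ∣ x := by
  have : NeZero (p ^ k) := ⟨pow_ne_zero k hp.ne_zero⟩
  rw [← ZMod.natCast_zmod_val x] at hx ⊢
  refine Nat.cast_dvd_cast (by_contra fun hdvd => hx ?_)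
  rw [ZMod.isUnit_iff_coprime]
  exact ((hp.coprime_iff_not_dvd.2 hdvd).pow_left k).symm

theorem zdGraph_zmod_prime_sq_eq_top (hp : p.Prime) : zdGraph (ZMod (p ^ 2)) = ⊤ := by
  have : NeZero (p ^ 2) := ⟨pow_ne_zero 2 hp.ne_zero⟩
  have hdvd {x : ZMod (p ^ 2)} (hx : x ∈ zeroDivisorSet (ZMod (p ^ 2))) :
      (p : ZMod (p ^ 2)) ∣ x :=
    natCast_dvd_of_not_isUnit_zmod_prime_pow hp (mem_zeroDivisorSet_iff_not_isUnit.1 hx)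
  have hsq : (p : ZMod (p ^ 2)) * p = 0 := by
    rw [← pow_two, ← Nat.cast_pow, ZMod.natCast_self]
  exact zdGraph_eq_top fun x hx y hy =>
    zero_dvd_iff.1 (hsq ▸ mul_dvd_mul (hdvd hx) (hdvd hy))

theorem ncard_zeroDivisorSet_zmod_prime_sq (hp : p.Prime) :
    (zeroDivisorSet (ZMod (p ^ 2))).ncard = p := by
  have : NeZero (p ^ 2) := ⟨pow_ne_zero 2 hp.ne_zero⟩
  have hcount := ncard_zeroDivisorSet_add_card_units (R := ZMod (p ^ 2))
  rw [Nat.card_eq_fintype_card (α := (ZMod (p ^ 2))ˣ), ZMod.card_units_eq_totient,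
    Nat.totient_prime_pow hp two_pos, Nat.card_zmod] at hcount
  have hsplit : p + p ^ (2 - 1) * (p - 1) = p ^ 2 := by
    obtain ⟨m, rfl⟩ := Nat.exists_eq_add_one.2 hp.pos
    simp only [Nat.add_sub_cancel]
    ring
  omega

end ZModPrimePow

theorem stmt2_general {R : Type*} [CommRing R] {n : ℕ} (hn : 1 < n) (hΓ : zdGraph R = ⊤)
    (hZ : (zeroDivisorSet R).ncard = n) :
    Nat.card (ZDV R) + 1 = n ∧
      (Even n → ¬ PartitionableGDA (zdGraph R)) ∧
      (Odd n → PartitionableGDA (zdGraph R) ∧ psiG (zdGraph R) = 2) := by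
  obtain ⟨_, y, hy, -⟩ : (zeroDivisorSet R).Nonempty := Set.nonempty_of_ncard_ne_zero (by omega)
  have : Nontrivial R := ⟨y, 0, hy⟩
  have hcard : Nat.card (ZDV R) + 1 = n :=
    hZ ▸ card_zdv_add_one (Set.finite_of_ncard_ne_zero (by omega))
  obtain ⟨_, _⟩ : Nonempty (ZDV R) ∧ Finite (ZDV R) := Nat.card_pos_iff.1 (by omega)
  rw [hΓ, partitionableGDA_top_iff, ← hcard, Nat.even_add_one, Nat.odd_add_one,
    Nat.not_odd_iff_even]
  exact ⟨rfl, id, fun heven =>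
    ⟨heven, psiG_top_le_two.antisymm (partitionableGDA_top_iff.2 heven)⟩⟩

/-- For a prime `p`: if `p = 2` then `Γ(ℤ_{p²})` has only one vertex and is
not partitionable into global defensive alliances; if `p ≠ 2` then `Γ(ℤ_{p²})` is
partitionable and `ψ_g(Γ(ℤ_{p²})) = 2`. -/
theorem stmt2 (p : ℕ) (hp : p.Prime) :
    (p = 2 → Nat.card (ZDV (ZMod (p ^ 2))) = 1 ∧
      ¬ PartitionableGDA (zdGraph (ZMod (p ^ 2)))) ∧
    (p ≠ 2 → PartitionableGDA (zdGraph (ZMod (p ^ 2))) ∧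
      psiG (zdGraph (ZMod (p ^ 2))) = 2) := by
  obtain ⟨hcard, heven, hodd⟩ := stmt2_general hp.one_lt (zdGraph_zmod_prime_sq_eq_top hp)
    (ncard_zeroDivisorSet_zmod_prime_sq hp)
  exact ⟨fun h2 => ⟨by omega, heven (h2 ▸ even_two)⟩, fun h2 => hodd (hp.odd_of_ne_two h2)⟩
end

section
/- Let p be a prime number. (1) If p = 2, then Γ(ℤ₂ × ℤ_p) is partitionable into global defensive alliances and ψ_g(Γ(ℤ₂ × ℤ_p)) = 2. (2) If p ≠ 2, then Γ(ℤ₂ × ℤ_p) is not partitionable into global defensive alliances. -/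
open Classical

/-!
The nonzero zero-divisors of `ℤ₂ × D`, for a domain `D`, are `(1, 0)` and the pairs `(0, b)` with
`b ≠ 0`, so `Γ(ℤ₂ × D)` is the star with centre `(1, 0)` on `|D|` vertices. In a star, a dominating
set avoiding the centre consists of all the leaves. Of two disjoint global defensive alliances one
avoids the centre, so the other is the centre alone; and the centre, having no neighbor in its own
part, is defended there only if there is at most one leaf. Conversely, if there is exactly one leaf,
the centre and the leaf are two global defensive alliances.
-/

section Partition

variable {V : Type*} {G : SimpleGraph V} {S : Set V} {P : Finset (Set V)}

lemma IsGDAPartition.card_le_natCard [Finite V] (hP : IsGDAPartition G P) :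
    P.card ≤ Nat.card V := by
  choose f hf using fun S : P => (hP.1 S S.2).1.1
  have f_injective : Function.Injective f := fun S T hST =>
    Subtype.ext <| hP.2.2.eq S.2 T.2 <| Set.not_disjoint_iff.2 ⟨f S, hf S, hST ▸ hf T⟩
  simpa only [Nat.card_eq_fintype_card, Fintype.card_coe] using
    Nat.card_le_card_of_injective f f_injective

lemma natCard_mem_upperBounds_card_isGDAPartition [Finite V] (G : SimpleGraph V) :
    Nat.card V ∈ upperBounds {n : ℕ | ∃ P : Finset (Set V), IsGDAPartition G P ∧ P.card = n} := by
  rintro _ ⟨P, hP, rfl⟩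
  exact hP.card_le_natCard

lemma psiG_le_natCard [Finite V] (G : SimpleGraph V) : psiG G ≤ Nat.card V :=
  csSup_le' (natCard_mem_upperBounds_card_isGDAPartition G)

lemma IsGDAPartition.card_le_psiG [Finite V] (hP : IsGDAPartition G P) : P.card ≤ psiG G :=
  le_csSup ⟨_, natCard_mem_upperBounds_card_isGDAPartition G⟩ ⟨P, hP, rfl⟩

lemma PartitionableGDA.exists_disjoint (hG : PartitionableGDA G) :
    ∃ S T, IsGlobalDefensiveAlliance G S ∧ IsGlobalDefensiveAlliance G T ∧ Disjoint S T := by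
  obtain ⟨_, ⟨P, hP, rfl⟩, one_lt_card⟩ := exists_lt_of_lt_csSup' (Nat.lt_of_succ_le hG)
  obtain ⟨S, hS, T, hT, hST⟩ := Finset.one_lt_card.1 one_lt_card
  exact ⟨S, T, hP.1 S hS, hP.1 T hT, hP.2.2 hS hT hST⟩

lemma IsGlobalDefensiveAlliance.partitionableGDA [Finite V] (hS : IsGlobalDefensiveAlliance G S)
    (hSc : IsGlobalDefensiveAlliance G Sᶜ) : PartitionableGDA G := by
  have ne_compl : S ≠ Sᶜ := by
    have : Nonempty V := hS.1.1.to_type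
    exact ne_compl_self
  have isGDAPartition : IsGDAPartition G {S, Sᶜ} := by
    refine ⟨by simp [hS, hSc], by simp, ?_⟩
    simpa [Set.pairwise_pair_of_symm] using fun _ => disjoint_compl_right (a := S)
  simpa only [PartitionableGDA, Finset.card_pair ne_compl] using isGDAPartition.card_le_psiG

end Partition

section Singleton

variable {V : Type*} {G : SimpleGraph V} {c : V}

lemma isDominatingSet_singleton_iff : IsDominatingSet G {c} ↔ G.IsUniversal c := by
  simp [IsDominatingSet, SimpleGraph.IsUniversal, G.adj_comm, eq_comm]

lemma degIn_singleton_self (G : SimpleGraph V) (c : V) : degIn G {c} c = 0 := by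
  have no_neighbor : {u | u ∈ ({c} : Set V) ∧ G.Adj c u} = ∅ := by
    ext u
    simpa using fun huc => huc ▸ G.loopless.irrefl c
  rw [degIn, no_neighbor, Set.ncard_empty]

lemma degIn_compl_singleton_of_isUniversal (hc : G.IsUniversal c) :
    degIn G {c}ᶜ c = ({c}ᶜ : Set V).ncard :=
  congrArg Set.ncard (Set.sep_eq_self_iff_mem_true.2 fun _ hu => hc (Ne.symm hu))

lemma isGlobalDefensiveAlliance_singleton_iff [Finite V] :
    IsGlobalDefensiveAlliance G {c} ↔ G.IsUniversal c ∧ Nat.card V ≤ 2 := by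
  have card_eq : 1 + ({c}ᶜ : Set V).ncard = Nat.card V := by
    rw [← Set.ncard_singleton c, Set.ncard_add_ncard_compl]
  rw [IsGlobalDefensiveAlliance, isDominatingSet_singleton_iff, and_comm]
  refine and_congr_right fun hc => ?_
  simp only [IsDefensiveAlliance, Set.singleton_nonempty, Set.mem_singleton_iff, forall_eq,
    true_and, degIn_singleton_self, degIn_compl_singleton_of_isUniversal hc]
  omega

end Singleton

section Star

open SimpleGraph

variable {V : Type*} {c : V} {S : Set V}

lemma IsDominatingSet.eq_compl_singleton_of_starGraph (hS : IsDominatingSet (starGraph c) S)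
    (hc : c ∉ S) : S = {c}ᶜ := by
  refine (Set.subset_compl_singleton_iff.2 hc).antisymm fun v hvc => ?_
  by_contra hv
  obtain ⟨u, hu, hvu⟩ := hS v hv
  obtain rfl : u = c := (starGraph_adj.1 hvu).2.resolve_left hvc
  exact hc hu

lemma isGlobalDefensiveAlliance_starGraph_compl_singleton [Nontrivial V] (c : V) :
    IsGlobalDefensiveAlliance (starGraph c) {c}ᶜ := by
  refine ⟨⟨exists_ne c, fun v _ => ?_⟩, fun v hv => ?_⟩
  · calc degIn (starGraph c) {c}ᶜᶜ v
        ≤ ({c} : Set V).ncard := by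
          rw [compl_compl]
          exact Set.ncard_le_ncard (Set.sep_subset _ _) (Set.finite_singleton c)
      _ ≤ degIn (starGraph c) {c}ᶜ v + 1 := by simp
  · obtain rfl : v = c := not_not.1 hv
    obtain ⟨u, hu⟩ := exists_ne v
    exact ⟨u, hu, starGraph_center_adj hu.symm⟩

theorem partitionableGDA_starGraph_iff [Finite V] (c : V) :
    PartitionableGDA (starGraph c) ↔ Nat.card V = 2 := by
  constructor
  · intro h
    obtain ⟨S, T, hS, hT, hST⟩ := h.exists_disjoint
    wlog hc : c ∉ S generalizing S T
    · exact this T S hT hS hST.symm (Set.disjoint_left.1 hST (not_not.1 hc))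
    obtain rfl := hS.2.eq_compl_singleton_of_starGraph hc
    obtain rfl : T = {c} :=
      hT.1.1.subset_singleton_iff.1 (Set.disjoint_compl_left_iff_subset.1 hST)
    have : Nontrivial V := hS.1.1.elim fun v hvc => nontrivial_of_ne v c hvc
    exact (isGlobalDefensiveAlliance_singleton_iff.1 hT).2.antisymm Finite.one_lt_card
  · intro h
    have : Nontrivial V := Finite.one_lt_card_iff_nontrivial.1 (h ▸ one_lt_two)
    exact IsGlobalDefensiveAlliance.partitionableGDA
      (isGlobalDefensiveAlliance_singleton_iff.2 ⟨isUniversal_starGraph_self, h.le⟩)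
      (isGlobalDefensiveAlliance_starGraph_compl_singleton c)

end Star

section ProductOfDomains

variable {A B : Type*} [CommRing A] [NoZeroDivisors A] [CommRing B] [NoZeroDivisors B]

lemma ZDV.fst_eq_zero_iff_snd_ne_zero (u : ZDV (A × B)) : u.1.1 = 0 ↔ u.1.2 ≠ 0 := by
  obtain ⟨⟨a, b⟩, hab, ⟨x, y⟩, hxy, h⟩ := u
  simp only [ne_eq, Prod.mk_eq_zero, Prod.mk_mul_mk, mul_eq_zero] at hab hxy h ⊢
  tauto

lemma zdGraph_prod_adj {u v : ZDV (A × B)} :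
    (zdGraph (A × B)).Adj u v ↔ (u.1.1 = 0 ↔ v.1.1 ≠ 0) := by
  have adj_iff : (zdGraph (A × B)).Adj u v ↔ u ≠ v ∧ u.1.1 * v.1.1 = 0 ∧ u.1.2 * v.1.2 = 0 :=
    and_congr_right fun _ => Prod.ext_iff
  have hu := u.fst_eq_zero_iff_snd_ne_zero
  have hv := v.fst_eq_zero_iff_snd_ne_zero
  rw [adj_iff, mul_eq_zero, mul_eq_zero]
  grind

end ProductOfDomains

section ZModTwoProd

/-- The vertex `(1, 0)` of `Γ(ℤ₂ × D)`, which is the centre of this star if `D` is a domain. -/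
def zdCenter (D : Type*) [CommRing D] [Nontrivial D] : ZDV (ZMod 2 × D) :=
  ⟨(1, 0), by simp, (0, 1), by simp, by simp⟩

variable {D : Type*} [CommRing D] [IsDomain D]

lemma ZDV.fst_eq_zero_iff_ne_zdCenter (u : ZDV (ZMod 2 × D)) : u.1.1 = 0 ↔ u ≠ zdCenter D := by
  refine ⟨?_, fun hu => ?_⟩
  · rintro h rfl
    exact one_ne_zero h
  · by_contra h
    have snd_eq_zero : u.1.2 = 0 := not_not.1 (mt u.fst_eq_zero_iff_snd_ne_zero.2 h)
    exact hu (Subtype.ext (Prod.ext (Fin.eq_one_of_ne_zero _ h) snd_eq_zero))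

variable (D)

lemma zdGraph_zmod_two_prod : zdGraph (ZMod 2 × D) = SimpleGraph.starGraph (zdCenter D) := by
  ext u v
  rw [zdGraph_prod_adj, Ne, u.fst_eq_zero_iff_ne_zdCenter, v.fst_eq_zero_iff_ne_zdCenter,
    SimpleGraph.starGraph_adj]
  grind

lemma ZDV.snd_bijective : Function.Bijective fun u : ZDV (ZMod 2 × D) => u.1.2 := by
  refine ⟨fun u v huv => ?_, fun b => ?_⟩
  · have fst_eq_zero_iff : u.1.1 = 0 ↔ v.1.1 = 0 := by
      rw [u.fst_eq_zero_iff_snd_ne_zero, v.fst_eq_zero_iff_snd_ne_zero]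
      exact not_congr (Eq.congr_left huv)
    have fst_eq : u.1.1 = v.1.1 := by
      generalize u.1.1 = x, v.1.1 = y at fst_eq_zero_iff
      decide +revert
    exact Subtype.ext (Prod.ext fst_eq huv)
  · obtain rfl | hb := eq_or_ne b 0
    · exact ⟨zdCenter D, rfl⟩
    · exact ⟨⟨(0, b), by simpa using hb, (1, 0), by simp, by simp⟩, rfl⟩

theorem stmt5_general [Finite D] :
    (Nat.card D = 2 → PartitionableGDA (zdGraph (ZMod 2 × D)) ∧
      psiG (zdGraph (ZMod 2 × D)) = 2) ∧
    (Nat.card D ≠ 2 → ¬ PartitionableGDA (zdGraph (ZMod 2 × D))) := by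
  have natCard_eq : Nat.card (ZDV (ZMod 2 × D)) = Nat.card D :=
    Nat.card_eq_of_bijective _ (ZDV.snd_bijective D)
  have partitionable_iff : PartitionableGDA (zdGraph (ZMod 2 × D)) ↔ Nat.card D = 2 := by
    rw [zdGraph_zmod_two_prod, partitionableGDA_starGraph_iff, natCard_eq]
  refine ⟨fun h => ⟨partitionable_iff.2 h, ?_⟩, mt partitionable_iff.1⟩
  exact ((psiG_le_natCard _).trans (natCard_eq.trans h).le).antisymm (partitionable_iff.2 h)

end ZModTwoProd

/-- For a prime `p`: if `p = 2` then `Γ(ℤ₂ × ℤ_p)` is partitionable into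
global defensive alliances with `ψ_g = 2`; if `p ≠ 2` then it is not partitionable. -/
theorem stmt5 (p : ℕ) (hp : p.Prime) :
    (p = 2 → PartitionableGDA (zdGraph (ZMod 2 × ZMod p)) ∧
      psiG (zdGraph (ZMod 2 × ZMod p)) = 2) ∧
    (p ≠ 2 → ¬ PartitionableGDA (zdGraph (ZMod 2 × ZMod p))) := by
  have : Fact p.Prime := ⟨hp⟩
  simpa only [Nat.card_zmod] using stmt5_general (ZMod p)
end

section
/- Let p be a prime number and n ≥ 2 a positive integer. Then Γ(ℤ₂ × ℤ_{p^n}) is partitionable into global defensive alliances if and only if p = 2 and n = 2. -/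
open Classical

/-!
A union of global defensive alliances is again one, so a graph is partitionable iff some set and
its complement are both global defensive alliances. Let `A` be a finite local ring with maximal
ideal `𝔪 ≠ 0`, and let `S` be the one of two such sets in `Γ(ℤ₂ × A)` that contains `x = (1, 0)`.

The vertices `(0, u)` with `u` a unit are leaves at `x`, so domination puts them all in `Sᶜ`. The
alliance condition at `x`, whose neighbours are all the `(0, b)`, then gives `|A| ≤ 2 |𝔪|`; as `𝔪`
is proper, equality holds, and `S` contains `(0, b)` for every nonzero `b ∈ 𝔪`. Such a `(0, b)` is
dominated by some `(1, w) ∈ Sᶜ`, all of whose neighbours `(0, c)` lie in `S`; the alliance condition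
at `(1, w)` forces the annihilator of `w` to be `{0, b}`. Hence `{0, b}` is an ideal for every
`b ∈ 𝔪`, so `𝔪² = 0`, and then `𝔪` itself is the annihilator `{0, b}`, so `|A| = 4`. Conversely,
if `|A| = 4` then `𝔪 = {0, t}`, and `{(1, 0), (0, t)}` and its complement form a partition.
-/

open IsLocalRing

section Graph

variable {V : Type*} {G : SimpleGraph V} {S T : Set V} {u v x : V}

theorem degIn_mono [Finite V] (h : S ⊆ T) (v : V) : degIn G S v ≤ degIn G T v :=
  Set.ncard_le_ncard fun _ hu ↦ ⟨h hu.1, hu.2⟩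

theorem degIn_pos [Finite V] (hu : u ∈ S) (huv : G.Adj v u) : 0 < degIn G S v :=
  (Set.ncard_pos (Set.toFinite _)).2 ⟨u, hu, huv⟩

theorem degIn_le_one_of_forall_eq (h : ∀ u ∈ S, G.Adj v u → u = x) : degIn G S v ≤ 1 :=
  (Set.ncard_le_ncard (t := {x}) fun u hu ↦ h u hu.1 hu.2).trans_eq (Set.ncard_singleton x)

theorem IsDefensiveAlliance.sUnion [Finite V] {C : Set (Set V)} (hC : C.Nonempty)
    (h : ∀ S ∈ C, IsDefensiveAlliance G S) : IsDefensiveAlliance G (⋃₀ C) := by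
  obtain ⟨S, hS⟩ := hC
  refine ⟨(h S hS).1.mono (Set.subset_sUnion_of_mem hS), ?_⟩
  rintro v ⟨T, hT, hv⟩
  have hTC : T ⊆ ⋃₀ C := Set.subset_sUnion_of_mem hT
  calc degIn G (⋃₀ C)ᶜ v ≤ degIn G Tᶜ v := degIn_mono (Set.compl_subset_compl.2 hTC) v
    _ ≤ degIn G T v + 1 := (h T hT).2 v hv
    _ ≤ degIn G (⋃₀ C) v + 1 := Nat.add_le_add_right (degIn_mono hTC v) 1

theorem IsDominatingSet.mono (hS : IsDominatingSet G S) (h : S ⊆ T) : IsDominatingSet G T :=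
  fun v hv ↦ (hS v fun hvS ↦ hv (h hvS)).imp fun _ hu ↦ ⟨h hu.1, hu.2⟩

theorem IsGlobalDefensiveAlliance.sUnion [Finite V] {C : Set (Set V)} (hC : C.Nonempty)
    (h : ∀ S ∈ C, IsGlobalDefensiveAlliance G S) : IsGlobalDefensiveAlliance G (⋃₀ C) := by
  refine ⟨.sUnion hC fun S hS ↦ (h S hS).1, ?_⟩
  obtain ⟨S, hS⟩ := hC
  exact (h S hS).2.mono (Set.subset_sUnion_of_mem hS)

theorem IsDominatingSet.mem_of_forall_adj_eq (hS : IsDominatingSet G S) (hx : x ∉ S)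
    (hv : ∀ u, G.Adj v u → u = x) : v ∈ S := by
  by_contra hvS
  obtain ⟨u, hu, huv⟩ := hS v hvS
  exact hx (hv u huv ▸ hu)

theorem partitionableGDA_iff_exists_isGDAPartition [Finite V] :
    PartitionableGDA G ↔ ∃ P : Finset (Set V), IsGDAPartition G P ∧ 1 < P.card := by
  have : Fintype (Set V) := Fintype.ofFinite _
  have hbdd : BddAbove {n | ∃ P : Finset (Set V), IsGDAPartition G P ∧ P.card = n} :=
    ⟨Fintype.card (Set V), by rintro _ ⟨P, -, rfl⟩; exact P.card_le_univ⟩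
  constructor
  · intro h
    obtain ⟨_, ⟨P, hP, rfl⟩, hcard⟩ := exists_lt_of_lt_csSup' (Nat.lt_of_succ_le h)
    exact ⟨P, hP, hcard⟩
  · rintro ⟨P, hP, hcard⟩
    exact hcard.trans_le (le_csSup hbdd ⟨P, hP, rfl⟩)

theorem IsGDAPartition.isGlobalDefensiveAlliance_compl [Finite V] {P : Finset (Set V)}
    (hP : IsGDAPartition G P) (hcard : 1 < P.card) (hS : S ∈ P) :
    IsGlobalDefensiveAlliance G Sᶜ := by
  obtain ⟨hGDA, hcover, hdisj⟩ := hP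
  obtain ⟨T, hT, hTS⟩ := Finset.exists_mem_ne hcard S
  have hcompl : Sᶜ = ⋃₀ ((P : Set (Set V)) \ {S}) := by
    refine Set.Subset.antisymm (fun v hv ↦ ?_) ?_
    · obtain ⟨U, hU, hvU⟩ : v ∈ ⋃₀ (P : Set (Set V)) := hcover ▸ Set.mem_univ v
      exact ⟨U, ⟨hU, fun hUS ↦ hv (hUS ▸ hvU)⟩, hvU⟩
    · exact Set.sUnion_subset fun U hU ↦ (hdisj hU.1 hS hU.2).subset_compl_right
  rw [hcompl]
  exact .sUnion ⟨T, hT, hTS⟩ fun U hU ↦ hGDA U hU.1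

theorem isGDAPartition_pair (hS : IsGlobalDefensiveAlliance G S)
    (hS' : IsGlobalDefensiveAlliance G Sᶜ) : IsGDAPartition G {S, Sᶜ} := by
  refine ⟨?_, ?_, ?_⟩
  · simpa only [Finset.mem_insert, Finset.mem_singleton, forall_eq_or_imp, forall_eq] using
      ⟨hS, hS'⟩
  · rw [Finset.coe_pair, Set.sUnion_pair, Set.union_compl_self]
  · rw [Finset.coe_pair, Set.pairwise_pair_of_symm]
    exact fun _ ↦ disjoint_compl_right

theorem partitionableGDA_iff_exists_compl [Finite V] :
    PartitionableGDA G ↔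
      ∃ S, IsGlobalDefensiveAlliance G S ∧ IsGlobalDefensiveAlliance G Sᶜ := by
  rw [partitionableGDA_iff_exists_isGDAPartition]
  constructor
  · rintro ⟨P, hP, hcard⟩
    obtain ⟨S, hS⟩ := Finset.card_pos.1 (zero_lt_one.trans hcard)
    exact ⟨S, hP.1 S hS, hP.isGlobalDefensiveAlliance_compl hcard hS⟩
  · rintro ⟨S, hS, hS'⟩
    obtain ⟨v, hv⟩ := hS.1.1
    have hne : S ≠ Sᶜ := fun h ↦ (h ▸ hv : v ∈ Sᶜ) hv
    exact ⟨{S, Sᶜ}, isGDAPartition_pair hS hS', (Finset.card_pair hne).symm ▸ one_lt_two⟩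

end Graph

theorem ncard_setOf_coe_mem_add_one {α : Type*} {a : α} {s : Set α} (hs : s.Finite) (ha : a ∈ s) :
    {b : {b : α // b ≠ a} | (b : α) ∈ s}.ncard + 1 = s.ncard := by
  rw [Set.ncard_subtype, ← Set.ncard_sdiff_singleton_add_one ha hs]
  rfl

section LocalRing

variable {A : Type*} [CommRing A]

theorem two_mul_card_ideal_le [Finite A] {I : Ideal A} (hI : I ≠ ⊤) :
    2 * Nat.card I ≤ Nat.card A := by
  have : Nontrivial (A ⧸ I) := Ideal.Quotient.nontrivial_iff.2 hI
  have : Finite (A ⧸ I) := Quotient.finite _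
  rw [I.card_eq_card_quotient_mul_card, mul_comm (Nat.card I)]
  exact Nat.mul_le_mul_right _ Finite.one_lt_card

theorem exists_ne_zero_mul_eq_zero [Finite A] {w : A} (hw : ¬ IsUnit w) :
    ∃ c : A, c ≠ 0 ∧ w * c = 0 := by
  rw [isUnit_iff_mem_nonZeroDivisors_of_finite, mem_nonZeroDivisors_iff_right] at hw
  simpa only [mul_comm _ w, not_forall, exists_prop, and_comm] using hw

variable [IsLocalRing A]

theorem mem_maximalIdeal_of_mul_eq_zero {b c : A} (hc : c ≠ 0) (h : b * c = 0) :
    b ∈ maximalIdeal A :=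
  (mem_maximalIdeal b).2 fun hb ↦ hc (hb.mul_right_eq_zero.1 h)

theorem eq_zero_of_mul_eq_self {b c : A} (hc : c ∈ maximalIdeal A) (h : c * b = b) : b = 0 := by
  have hunit : IsUnit (1 - c) := isUnit_one_sub_self_of_mem_nonunits c hc
  exact hunit.mul_right_eq_zero.1 (by rw [sub_mul, one_mul, h, sub_self])

theorem maximalIdeal_eq_pair_of_forall_exists_annihilator_eq_pair
    (h : ∀ b ∈ maximalIdeal A, b ≠ 0 → ∃ w, {c | w * c = 0} = {0, b})
    {b : A} (hb : b ∈ maximalIdeal A) (hb0 : b ≠ 0) : (maximalIdeal A : Set A) = {0, b} := by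
  have hmul : ∀ b ∈ maximalIdeal A, ∀ c ∈ maximalIdeal A, c * b = 0 := by
    intro b hb c hc
    rcases eq_or_ne b 0 with rfl | hb0
    · exact mul_zero c
    obtain ⟨w, hann⟩ := h b hb hb0
    have hwb : w * b = 0 := hann.symm.subset (Set.mem_insert_of_mem 0 rfl)
    have hcb : c * b ∈ ({0, b} : Set A) :=
      hann.subset (show w * (c * b) = 0 by rw [mul_left_comm, hwb, mul_zero])
    exact hcb.resolve_right fun hcb ↦ hb0 (eq_zero_of_mul_eq_self hc hcb)
  obtain ⟨w, hann⟩ := h b hb hb0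
  have hw : w ∈ maximalIdeal A :=
    mem_maximalIdeal_of_mul_eq_zero hb0 (hann.symm.subset (Set.mem_insert_of_mem 0 rfl))
  refine Set.Subset.antisymm (fun c hc ↦ hann.subset (hmul c hc w hw)) ?_
  rintro _ (rfl | rfl)
  exacts [zero_mem _, hb]

theorem isUnit_of_maximalIdeal_eq_pair {b t : A} (hm : (maximalIdeal A : Set A) = {0, t})
    (hb0 : b ≠ 0) (hbt : b ≠ t) : IsUnit b := by
  by_contra hunit
  exact hbt ((hm.subset hunit).resolve_left hb0)

theorem exists_maximalIdeal_eq_pair_of_card_eq_four (hA : ¬ IsField A) (hcard : Nat.card A = 4) :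
    ∃ t ≠ 0, (maximalIdeal A : Set A) = {0, t} := by
  have : Finite A := Nat.finite_of_card_ne_zero (by omega)
  obtain ⟨t, ht, ht0⟩ := Submodule.exists_mem_ne_zero_of_ne_bot
    (mt isField_iff_maximalIdeal_eq.2 hA)
  refine ⟨t, ht0, (Set.eq_of_subset_of_ncard_le ?_ ?_).symm⟩
  · rintro _ (rfl | rfl)
    exacts [zero_mem _, ht]
  · rw [Set.ncard_pair ht0.symm]
    have := two_mul_card_ideal_le (maximalIdeal.isMaximal A).ne_top
    change Nat.card (maximalIdeal A) ≤ 2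
    omega

end LocalRing

section ZeroDivisorGraph

variable {A : Type*} [CommRing A]

/-- The vertex `(0, b)` of `Γ(ℤ₂ × A)`, for nonzero `b`. -/
def zeroVertex (b : {b : A // b ≠ 0}) : ZDV (ZMod 2 × A) :=
  ⟨(0, b), by simpa using b.2, (1, 0), by simp, by simp⟩

theorem zeroVertex_injective : Function.Injective (zeroVertex (A := A)) := fun _ _ h ↦
  Subtype.ext (congrArg (fun v : ZDV (ZMod 2 × A) ↦ v.1.2) h)

theorem adj_zeroVertex_zeroVertex {b c : {b : A // b ≠ 0}} :
    (zdGraph (ZMod 2 × A)).Adj (zeroVertex b) (zeroVertex c) ↔ b ≠ c ∧ (b * c : A) = 0 := by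
  simp [zdGraph, zeroVertex, Subtype.ext_iff]

variable [IsLocalRing A] [Finite A]

/-- The vertex `(1, w)` of `Γ(ℤ₂ × A)`, for `w` in the maximal ideal of `A`; together with the
vertices `zeroVertex b` these are all the vertices. -/
def oneVertex (w : maximalIdeal A) : ZDV (ZMod 2 × A) :=
  ⟨(1, w), by simp, by
    obtain ⟨c, hc, hwc⟩ := exists_ne_zero_mul_eq_zero w.2
    exact ⟨(0, c), by simpa using hc, by simpa using hwc⟩⟩

theorem zeroVertex_ne_oneVertex (b : {b : A // b ≠ 0}) (w : maximalIdeal A) :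
    zeroVertex b ≠ oneVertex w := fun h ↦
  zero_ne_one (congrArg (fun v : ZDV (ZMod 2 × A) ↦ v.1.1) h)

theorem oneVertex_injective : Function.Injective (oneVertex (A := A)) := fun _ _ h ↦
  Subtype.ext (congrArg (fun v : ZDV (ZMod 2 × A) ↦ v.1.2) h)

theorem eq_zeroVertex_or_eq_oneVertex (v : ZDV (ZMod 2 × A)) :
    (∃ b, v = zeroVertex b) ∨ ∃ w, v = oneVertex w := by
  obtain ⟨⟨a, b⟩, hv, ⟨c, d⟩, hcd, h⟩ := v
  obtain ⟨hac, hbd⟩ := Prod.mk_eq_zero.1 h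
  rcases Fin.exists_fin_two.1 ⟨a, rfl⟩ with rfl | rfl
  · exact .inl ⟨⟨b, by rintro rfl; exact hv rfl⟩, rfl⟩
  · have hd : d ≠ 0 := by
      rintro rfl
      exact hcd (Prod.mk_eq_zero.2 ⟨(one_mul c).symm.trans hac, rfl⟩)
    exact .inr ⟨⟨b, mem_maximalIdeal_of_mul_eq_zero hd hbd⟩, rfl⟩

theorem adj_oneVertex_zeroVertex {w : maximalIdeal A} {b : {b : A // b ≠ 0}} :
    (zdGraph (ZMod 2 × A)).Adj (oneVertex w) (zeroVertex b) ↔ (w * b : A) = 0 := by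
  simp [zdGraph, oneVertex, zeroVertex]

theorem not_adj_oneVertex_oneVertex {w z : maximalIdeal A} :
    ¬ (zdGraph (ZMod 2 × A)).Adj (oneVertex w) (oneVertex z) := fun h ↦
  one_ne_zero (Prod.mk_eq_zero.1 h.2).1

theorem adj_oneVertex_iff {w : maximalIdeal A} {v : ZDV (ZMod 2 × A)} :
    (zdGraph (ZMod 2 × A)).Adj (oneVertex w) v ↔
      ∃ b : {b : A // b ≠ 0}, v = zeroVertex b ∧ (w * b : A) = 0 := by
  constructor
  · intro h
    rcases eq_zeroVertex_or_eq_oneVertex v with ⟨b, rfl⟩ | ⟨z, rfl⟩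
    · exact ⟨b, rfl, adj_oneVertex_zeroVertex.1 h⟩
    · exact absurd h not_adj_oneVertex_oneVertex
  · rintro ⟨b, rfl, hwb⟩
    exact adj_oneVertex_zeroVertex.2 hwb

theorem adj_oneVertex_zero_zeroVertex (b : {b : A // b ≠ 0}) :
    (zdGraph (ZMod 2 × A)).Adj (oneVertex 0) (zeroVertex b) :=
  adj_oneVertex_zeroVertex.2 (zero_mul _)

theorem eq_oneVertex_zero_of_adj_zeroVertex {b : {b : A // b ≠ 0}} (hb : IsUnit (b : A))
    {v : ZDV (ZMod 2 × A)} (h : (zdGraph (ZMod 2 × A)).Adj (zeroVertex b) v) :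
    v = oneVertex 0 := by
  rcases eq_zeroVertex_or_eq_oneVertex v with ⟨c, rfl⟩ | ⟨w, rfl⟩
  · exact absurd (hb.mul_right_eq_zero.1 (adj_zeroVertex_zeroVertex.1 h).2) c.2
  · rw [show w = 0 from Subtype.ext (hb.mul_left_eq_zero.1 (adj_oneVertex_zeroVertex.1 h.symm))]

theorem degIn_oneVertex (S : Set (ZDV (ZMod 2 × A))) (w : maximalIdeal A) :
    degIn (zdGraph (ZMod 2 × A)) S (oneVertex w) =
      {b : {b : A // b ≠ 0} | zeroVertex b ∈ S ∧ (w * b : A) = 0}.ncard := by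
  rw [degIn, ← Set.ncard_image_of_injective _ zeroVertex_injective]
  congr 1
  ext v
  simp only [adj_oneVertex_iff, Set.mem_ofPred_eq, Set.mem_image]
  constructor
  · rintro ⟨hv, b, rfl, hwb⟩
    exact ⟨b, ⟨hv, hwb⟩, rfl⟩
  · rintro ⟨b, ⟨hb, hwb⟩, rfl⟩
    exact ⟨hb, b, rfl, hwb⟩

theorem degIn_oneVertex_zero (S : Set (ZDV (ZMod 2 × A))) :
    degIn (zdGraph (ZMod 2 × A)) S (oneVertex 0) =
      {b : {b : A // b ≠ 0} | zeroVertex b ∈ S}.ncard := by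
  simp only [degIn_oneVertex, ZeroMemClass.coe_zero, zero_mul, and_true]

theorem degIn_add_degIn_compl_oneVertex_zero (S : Set (ZDV (ZMod 2 × A))) :
    degIn (zdGraph (ZMod 2 × A)) S (oneVertex 0) +
      degIn (zdGraph (ZMod 2 × A)) Sᶜ (oneVertex 0) + 1 = Nat.card A := by
  rw [degIn_oneVertex_zero, degIn_oneVertex_zero, ← Set.ncard_univ,
    ← ncard_setOf_coe_mem_add_one Set.finite_univ (Set.mem_univ (0 : A))]
  congr 1
  exact (Set.ncard_add_ncard_compl _).trans (by simp)

section Necessity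

variable {S : Set (ZDV (ZMod 2 × A))}

theorem coe_mem_maximalIdeal_of_zeroVertex_mem (hx : oneVertex 0 ∈ S)
    (hS' : IsDominatingSet (zdGraph (ZMod 2 × A)) Sᶜ) {b : {b : A // b ≠ 0}}
    (hb : zeroVertex b ∈ S) : (b : A) ∈ maximalIdeal A :=
  (mem_maximalIdeal _).2 fun hunit ↦ hS'.mem_of_forall_adj_eq (not_not_intro hx)
    (fun _ ↦ eq_oneVertex_zero_of_adj_zeroVertex hunit) hb

theorem card_eq_two_mul_and_zeroVertex_mem_iff (hS : IsDefensiveAlliance (zdGraph (ZMod 2 × A)) S)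
    (hx : oneVertex 0 ∈ S) (hS' : IsDominatingSet (zdGraph (ZMod 2 × A)) Sᶜ) :
    Nat.card A = 2 * Nat.card (maximalIdeal A) ∧
      ∀ b : {b : A // b ≠ 0}, zeroVertex b ∈ S ↔ (b : A) ∈ maximalIdeal A := by
  have hsub : {b : {b : A // b ≠ 0} | zeroVertex b ∈ S} ⊆ {b | (b : A) ∈ maximalIdeal A} :=
    fun _ ↦ coe_mem_maximalIdeal_of_zeroVertex_mem hx hS'
  have hle := Set.ncard_le_ncard hsub
  have hdeg := hS.2 _ hx
  have hsum := degIn_add_degIn_compl_oneVertex_zero S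
  have hcard : {b : {b : A // b ≠ 0} | (b : A) ∈ maximalIdeal A}.ncard + 1 =
      Nat.card (maximalIdeal A) :=
    ncard_setOf_coe_mem_add_one (Set.toFinite _) (zero_mem (maximalIdeal A))
  rw [degIn_oneVertex_zero S] at hdeg hsum
  have hcardA : Nat.card A = 2 * Nat.card (maximalIdeal A) :=
    le_antisymm (by omega) (two_mul_card_ideal_le (maximalIdeal.isMaximal A).ne_top)
  have heq := Set.eq_of_subset_of_ncard_le hsub (by omega)
  exact ⟨hcardA, Set.ext_iff.1 heq⟩

theorem exists_annihilator_eq_pair (hx : oneVertex 0 ∈ S)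
    (hmem : ∀ b : {b : A // b ≠ 0}, zeroVertex b ∈ S ↔ (b : A) ∈ maximalIdeal A)
    (hS' : IsGlobalDefensiveAlliance (zdGraph (ZMod 2 × A)) Sᶜ) {b : A}
    (hb : b ∈ maximalIdeal A) (hb0 : b ≠ 0) :
    ∃ w, {c | w * c = 0} = {0, b} := by
  obtain ⟨v, hv, hadj⟩ := hS'.2 (zeroVertex ⟨b, hb0⟩) (not_not_intro ((hmem _).2 hb))
  rcases eq_zeroVertex_or_eq_oneVertex v with ⟨c, rfl⟩ | ⟨w, rfl⟩
  · have hbc := (adj_zeroVertex_zeroVertex.1 hadj).2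
    exact absurd ((hmem c).2 (mem_maximalIdeal_of_mul_eq_zero hb0 (mul_comm b _ ▸ hbc))) hv
  have hwb : (w * b : A) = 0 := adj_oneVertex_zeroVertex.1 hadj.symm
  have hw0 : (w : A) ≠ 0 := fun hw0 ↦ hv ((Subtype.ext hw0 : w = 0) ▸ hx)
  have hmem_of_mul (c : {b : A // b ≠ 0}) (hc : (w * c : A) = 0) : zeroVertex c ∈ S :=
    (hmem c).2 (mem_maximalIdeal_of_mul_eq_zero hw0 (mul_comm (w : A) _ ▸ hc))
  have hdeg_compl : degIn (zdGraph (ZMod 2 × A)) Sᶜ (oneVertex w) = 0 := by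
    rw [degIn_oneVertex, Set.ncard_eq_zero, Set.eq_empty_iff_forall_notMem]
    exact fun c hc ↦ hc.1 (hmem_of_mul c hc.2)
  have hdeg : degIn (zdGraph (ZMod 2 × A)) S (oneVertex w) ≤ 1 := by
    simpa only [compl_compl, hdeg_compl] using hS'.1.2 _ hv
  rw [degIn_oneVertex, Set.ncard_le_one] at hdeg
  refine ⟨w, Set.ext fun c ↦ ⟨fun hc ↦ ?_, ?_⟩⟩
  · exact or_iff_not_imp_left.2 fun hc0 ↦ Subtype.ext_iff.1 <|
      hdeg ⟨c, hc0⟩ ⟨hmem_of_mul ⟨c, hc0⟩ hc, hc⟩ ⟨b, hb0⟩ ⟨hmem_of_mul ⟨b, hb0⟩ hwb, hwb⟩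
  · rintro (rfl | rfl)
    exacts [mul_zero _, hwb]

theorem card_eq_four_of_isGlobalDefensiveAlliance (hA : ¬ IsField A)
    (hS : IsGlobalDefensiveAlliance (zdGraph (ZMod 2 × A)) S)
    (hS' : IsGlobalDefensiveAlliance (zdGraph (ZMod 2 × A)) Sᶜ)
    (hx : oneVertex 0 ∈ S) : Nat.card A = 4 := by
  obtain ⟨hcard, hmem⟩ := card_eq_two_mul_and_zeroVertex_mem_iff hS.1 hx hS'.2
  obtain ⟨t, ht, ht0⟩ := Submodule.exists_mem_ne_zero_of_ne_bot
    (mt isField_iff_maximalIdeal_eq.2 hA)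
  have hpair := maximalIdeal_eq_pair_of_forall_exists_annihilator_eq_pair
    (fun _ ↦ exists_annihilator_eq_pair hx hmem hS') ht ht0
  have hcard' : Nat.card (maximalIdeal A) = 2 := by
    rw [← Set.ncard_pair ht0.symm, ← hpair]
    rfl
  rw [hcard, hcard']

end Necessity

section Sufficiency

variable {t : {b : A // b ≠ 0}}

theorem eq_zeroVertex_of_adj_oneVertex (hm : (maximalIdeal A : Set A) = {0, (t : A)})
    {w : maximalIdeal A} (hw : w ≠ 0) {v : ZDV (ZMod 2 × A)}
    (h : (zdGraph (ZMod 2 × A)).Adj (oneVertex w) v) : v = zeroVertex t := by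
  obtain ⟨b, rfl, hwb⟩ := adj_oneVertex_iff.1 h
  have hb : (b : A) ∈ maximalIdeal A :=
    mem_maximalIdeal_of_mul_eq_zero (Subtype.coe_ne_coe.2 hw) ((mul_comm _ _).trans hwb)
  rw [Subtype.ext ((hm.subset hb).resolve_left b.2)]

theorem adj_oneVertex_zeroVertex_of_maximalIdeal_eq_pair
    (hm : (maximalIdeal A : Set A) = {0, (t : A)}) (w : maximalIdeal A) :
    (zdGraph (ZMod 2 × A)).Adj (oneVertex w) (zeroVertex t) := by
  rcases eq_or_ne w 0 with rfl | hw
  · exact adj_oneVertex_zero_zeroVertex t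
  · obtain ⟨c, hc, hwc⟩ := exists_ne_zero_mul_eq_zero w.2
    have hadj : (zdGraph (ZMod 2 × A)).Adj (oneVertex w) (zeroVertex ⟨c, hc⟩) :=
      adj_oneVertex_zeroVertex.2 hwc
    exact eq_zeroVertex_of_adj_oneVertex hm hw hadj ▸ hadj

theorem eq_oneVertex_of_adj_zeroVertex (hm : (maximalIdeal A : Set A) = {0, (t : A)})
    (ht : (t : A) ∈ maximalIdeal A) {v : ZDV (ZMod 2 × A)} (hv : v ≠ oneVertex 0)
    (h : (zdGraph (ZMod 2 × A)).Adj (zeroVertex t) v) : v = oneVertex (A := A) ⟨t, ht⟩ := by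
  rcases eq_zeroVertex_or_eq_oneVertex v with ⟨b, rfl⟩ | ⟨w, rfl⟩
  · have hbt : (b : A) ≠ t := Subtype.coe_ne_coe.2 (adj_zeroVertex_zeroVertex.1 h).1.symm
    have hb := isUnit_of_maximalIdeal_eq_pair hm b.2 hbt
    exact absurd (eq_oneVertex_zero_of_adj_zeroVertex hb h.symm) (zeroVertex_ne_oneVertex t 0)
  · have hw0 : (w : A) ≠ 0 := fun hw0 ↦ hv (congrArg oneVertex (Subtype.ext hw0))
    have hwt : (w : A) = t := (hm.subset w.2).resolve_left hw0
    exact congrArg oneVertex (Subtype.ext hwt)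

theorem isGlobalDefensiveAlliance_pair (hm : (maximalIdeal A : Set A) = {0, (t : A)})
    (hcard : Nat.card A = 4) :
    IsGlobalDefensiveAlliance (zdGraph (ZMod 2 × A)) {oneVertex 0, zeroVertex t} := by
  have ht : (t : A) ∈ maximalIdeal A := hm.symm.subset (.inr rfl)
  refine ⟨⟨Set.insert_nonempty _ _, ?_⟩, fun v hv ↦ ?_⟩
  · rintro _ (rfl | rfl)
    · have hpos : 0 < degIn (zdGraph (ZMod 2 × A)) {oneVertex 0, zeroVertex t} (oneVertex 0) :=
        degIn_pos (.inr rfl) (adj_oneVertex_zero_zeroVertex t)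
      have hsum := degIn_add_degIn_compl_oneVertex_zero {oneVertex 0, zeroVertex t}
      omega
    · refine le_add_left <|
        degIn_le_one_of_forall_eq (x := oneVertex (A := A) ⟨t, ht⟩) fun v hv hadj ↦ ?_
      exact eq_oneVertex_of_adj_zeroVertex hm ht (fun hvx ↦ hv (.inl hvx)) hadj
  · rcases eq_zeroVertex_or_eq_oneVertex v with ⟨b, rfl⟩ | ⟨w, rfl⟩
    · exact ⟨oneVertex 0, .inl rfl, (adj_oneVertex_zero_zeroVertex b).symm⟩
    · exact ⟨zeroVertex t, .inr rfl, adj_oneVertex_zeroVertex_of_maximalIdeal_eq_pair hm w⟩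

theorem isGlobalDefensiveAlliance_compl_pair (hm : (maximalIdeal A : Set A) = {0, (t : A)}) :
    IsGlobalDefensiveAlliance (zdGraph (ZMod 2 × A)) {oneVertex 0, zeroVertex t}ᶜ := by
  have ht : (t : A) ∈ maximalIdeal A := hm.symm.subset (.inr rfl)
  have h1 : zeroVertex ⟨1, one_ne_zero⟩ ∉ ({oneVertex 0, zeroVertex t} : Set _) := by
    rintro (h | h)
    · exact zeroVertex_ne_oneVertex _ _ h
    · exact (mem_maximalIdeal _).1 ht (zeroVertex_injective h ▸ isUnit_one)
  have h2 : oneVertex (A := A) ⟨t, ht⟩ ∉ ({oneVertex 0, zeroVertex t} : Set _) := by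
    rintro (h | h)
    · exact t.2 (congrArg Subtype.val (oneVertex_injective h))
    · exact zeroVertex_ne_oneVertex _ _ h.symm
  refine ⟨⟨⟨_, h1⟩, fun v hv ↦ ?_⟩, fun v hv ↦ ?_⟩
  · rw [compl_compl]
    refine le_add_left ?_
    rcases eq_zeroVertex_or_eq_oneVertex v with ⟨b, rfl⟩ | ⟨w, rfl⟩
    · have hbt : (b : A) ≠ t := fun hbt ↦ hv (.inr (congrArg zeroVertex (Subtype.ext hbt)))
      have hb := isUnit_of_maximalIdeal_eq_pair hm b.2 hbt
      exact degIn_le_one_of_forall_eq fun _ _ ↦ eq_oneVertex_zero_of_adj_zeroVertex hb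
    · have hw : w ≠ 0 := fun hw ↦ hv (.inl (hw ▸ rfl))
      exact degIn_le_one_of_forall_eq fun _ _ ↦ eq_zeroVertex_of_adj_oneVertex hm hw
  · rcases not_not.1 hv with rfl | rfl
    · exact ⟨_, h1, adj_oneVertex_zero_zeroVertex _⟩
    · exact ⟨_, h2, (adj_oneVertex_zeroVertex_of_maximalIdeal_eq_pair hm _).symm⟩

end Sufficiency

end ZeroDivisorGraph

theorem stmt7_general {A : Type*} [CommRing A] [IsLocalRing A] [Finite A] (hA : ¬ IsField A) :
    PartitionableGDA (zdGraph (ZMod 2 × A)) ↔ Nat.card A = 4 := by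
  rw [partitionableGDA_iff_exists_compl]
  constructor
  · rintro ⟨S, hS, hS'⟩
    by_cases hx : oneVertex 0 ∈ S
    · exact card_eq_four_of_isGlobalDefensiveAlliance hA hS hS' hx
    · exact card_eq_four_of_isGlobalDefensiveAlliance hA hS' ((compl_compl S).symm ▸ hS) hx
  · intro hcard
    obtain ⟨t, ht0, hm⟩ := exists_maximalIdeal_eq_pair_of_card_eq_four hA hcard
    exact ⟨{oneVertex 0, zeroVertex ⟨t, ht0⟩}, isGlobalDefensiveAlliance_pair hm hcard,
      isGlobalDefensiveAlliance_compl_pair hm⟩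

theorem isLocalRing_zmod_prime_pow {p n : ℕ} (hp : p.Prime) (hn : n ≠ 0) :
    IsLocalRing (ZMod (p ^ n)) := by
  have : Fact p.Prime := ⟨hp⟩
  have : Fact (1 < p ^ n) := ⟨Nat.one_lt_pow hn hp.one_lt⟩
  exact .of_surjective' (PadicInt.toZModPow n) (ZMod.ringHom_surjective _)

theorem not_isField_zmod_prime_pow {p n : ℕ} (hp : p.Prime) (hn : n ≠ 1) :
    ¬ IsField (ZMod (p ^ n)) := by
  intro h
  have : IsDomain (ZMod (p ^ n)) := h.isDomain
  have : NeZero (p ^ n) := ⟨pow_ne_zero n hp.ne_zero⟩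
  exact Nat.Prime.not_prime_pow' hn (CharP.char_is_prime (ZMod (p ^ n)) (p ^ n))

theorem prime_pow_eq_four_iff {p n : ℕ} (hp : p.Prime) : p ^ n = 4 ↔ p = 2 ∧ n = 2 := by
  constructor
  · intro h
    have hn : n ≠ 0 := by
      rintro rfl
      simp at h
    exact hp.pow_inj' Nat.prime_two hn two_ne_zero h
  · rintro ⟨rfl, rfl⟩
    rfl

/-- For a prime `p` and `n ≥ 2`, `Γ(ℤ₂ × ℤ_{p^n})` is partitionable into
global defensive alliances iff `p = 2` and `n = 2`. -/
theorem stmt7 (p n : ℕ) (hp : p.Prime) (hn : 2 ≤ n) :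
    PartitionableGDA (zdGraph (ZMod 2 × ZMod (p ^ n))) ↔ (p = 2 ∧ n = 2) := by
  have := isLocalRing_zmod_prime_pow hp (by omega : n ≠ 0)
  have : NeZero (p ^ n) := ⟨pow_ne_zero n hp.ne_zero⟩
  rw [stmt7_general (not_isField_zmod_prime_pow hp (by omega)), Nat.card_zmod,
    prime_pow_eq_four_iff hp]
end

section
/- Let p and q be prime numbers with p ≥ 3 and q ≥ 3. Then ψ_g(Γ(ℤ₂ × ℤ_p × ℤ_q)) = 1, i.e., Γ(ℤ₂ × ℤ_p × ℤ_q) is not partitionable into global defensive alliances. -/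
open Classical

/-
Suppose a vertex `a` has at least as many pendant neighbors as other neighbors, and let `S ∋ a` and
`T` be disjoint global defensive alliances. Domination forces every pendant neighbor of `a` into
`T`, so `a` can only be defended in `S` if all its other neighbors lie in `S`. A second vertex `v`
whose neighbors, at least two in number, are all neighbors of `a` then has all of them in `S`: it
is undefended if it lies in `T`, and undominated by `T` otherwise.

In `Γ(ℤ₂ × R)` take `a = (1, 0)`, whose pendant neighbors are the `(0, r)` with `r` regular, and
`v = (1, y)` with `y` a nonzero zero-divisor. For `R = K × L` with fields of orders `k, l ≥ 3` the
required count of neighbors is `(k - 1) + (l - 1) ≤ (k - 1) * (l - 1)`.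
-/

section Graph

variable {V : Type*} {G : SimpleGraph V} {S T : Set V} {a v : V}

/-- The pendant vertices (leaves) of `G` attached to `a`, i.e. those whose only neighbor is `a`. -/
def pendantSet (G : SimpleGraph V) (a : V) : Set V :=
  {x | G.neighborSet x = {a}}

lemma pendantSet_subset_neighborSet : pendantSet G a ⊆ G.neighborSet a := fun x hx ↦
  (hx.ge rfl : G.Adj x a).symm

lemma IsDominatingSet.pendantSet_subset (hT : IsDominatingSet G T) (ha : a ∉ T) :
    pendantSet G a ⊆ T := by
  intro x hx
  by_contra hxT
  obtain ⟨w, hwT, hw⟩ := hT x hxT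
  obtain rfl : w = a := hx.le hw
  exact ha hwT

lemma IsDefensiveAlliance.neighborSet_diff_subset {L : Set V} (hS : IsDefensiveAlliance G S)
    (haS : a ∈ S) (hfin : (G.neighborSet a).Finite) (hL : L ⊆ G.neighborSet a) (hLS : L ⊆ Sᶜ)
    (hcard : (G.neighborSet a \ L).ncard ≤ L.ncard) : G.neighborSet a \ L ⊆ S := by
  rintro u ⟨hau, huL⟩
  by_contra huS
  have attackers : L.ncard + 1 ≤ degIn G Sᶜ a := by
    rw [← Set.ncard_insert_of_notMem huL (hfin.subset hL)]
    refine Set.ncard_le_ncard ?_ (hfin.subset fun _ hw ↦ hw.2)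
    exact Set.insert_subset ⟨huS, hau⟩ fun w hw ↦ ⟨hLS hw, hL hw⟩
  have defenders : degIn G S a < (G.neighborSet a \ L).ncard := by
    refine Set.ncard_lt_ncard ⟨?_, fun h ↦ huS (h ⟨hau, huL⟩).1⟩ hfin.sdiff
    exact fun w hw ↦ ⟨hw.2, fun hwL ↦ hLS hwL hw.1⟩
  have := hS.2 a haS
  omega

lemma IsGlobalDefensiveAlliance.not_disjoint_of_neighborSet_subset
    (hT : IsGlobalDefensiveAlliance G T) (hvS : G.neighborSet v ⊆ S)
    (hv : 2 ≤ (G.neighborSet v).ncard) : ¬ Disjoint S T := by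
  intro hST
  have hvT : G.neighborSet v ⊆ Tᶜ := fun w hw ↦ hST.notMem_of_mem_left (hvS hw)
  by_cases hv_mem : v ∈ T
  · have attackers : degIn G Tᶜ v = (G.neighborSet v).ncard :=
      congrArg Set.ncard (Set.inter_eq_right.2 hvT)
    have defenders : degIn G T v = 0 := by
      rw [← Set.ncard_empty V]
      exact congrArg Set.ncard (Set.eq_empty_of_forall_notMem fun w hw ↦ hvT hw.2 hw.1)
    have := hT.1.2 v hv_mem
    omega
  · obtain ⟨w, hwT, hw⟩ := hT.2 v hv_mem
    exact hvT hw hwT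

lemma isGlobalDefensiveAlliance_univ [Nonempty V] : IsGlobalDefensiveAlliance G Set.univ :=
  ⟨⟨Set.univ_nonempty, by simp [degIn]⟩, fun v hv ↦ absurd (Set.mem_univ v) hv⟩

lemma psiG_eq_one_of_forall_not_disjoint (a : V)
    (h : ∀ S T, IsGlobalDefensiveAlliance G S → IsGlobalDefensiveAlliance G T → a ∈ S →
      ¬ Disjoint S T) : psiG G = 1 := by
  have : Nonempty V := ⟨a⟩
  refine IsGreatest.csSup_eq ⟨⟨{Set.univ}, ⟨?_, by simp, by simp⟩, by simp⟩, ?_⟩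
  · simpa using isGlobalDefensiveAlliance_univ
  · rintro _ ⟨P, ⟨hP, hcover, hdisj⟩, rfl⟩
    by_contra! hcard
    obtain ⟨S, hSP, haS⟩ : a ∈ ⋃₀ (P : Set (Set V)) := hcover ▸ Set.mem_univ a
    obtain ⟨T, hTP, hTS⟩ := Finset.exists_mem_ne hcard S
    exact h S T (hP S hSP) (hP T hTP) haS (hdisj hSP hTP hTS.symm)

theorem psiG_eq_one_of_ncard_le_ncard_pendantSet (hfin : (G.neighborSet a).Finite)
    (hcard : (G.neighborSet a \ pendantSet G a).ncard ≤ (pendantSet G a).ncard) (hva : v ≠ a)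
    (hsub : G.neighborSet v ⊆ G.neighborSet a) (hv : 2 ≤ (G.neighborSet v).ncard) :
    psiG G = 1 := by
  refine psiG_eq_one_of_forall_not_disjoint a fun S T hS hT haS hST ↦ ?_
  have hpendT : pendantSet G a ⊆ T := hT.2.pendantSet_subset (hST.notMem_of_mem_left haS)
  have hpendS : pendantSet G a ⊆ Sᶜ := fun x hx ↦ hST.notMem_of_mem_right (hpendT hx)
  have hS_nbrs : G.neighborSet a \ pendantSet G a ⊆ S :=
    hS.1.neighborSet_diff_subset haS hfin pendantSet_subset_neighborSet hpendS hcard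
  have hvS : G.neighborSet v ⊆ S := fun w hw ↦
    hS_nbrs ⟨hsub hw, fun hpend ↦ hva (hpend.le (G.adj_symm hw))⟩
  exact hT.not_disjoint_of_neighborSet_subset hvS hv hST

lemma not_partitionableGDA_of_psiG_eq_one (h : psiG G = 1) : ¬ PartitionableGDA G := by
  simp [PartitionableGDA, h]

end Graph

section ZeroDivisorGraph

variable {A R : Type*} [CommRing A] [CommRing R]

lemma zdGraph_adj_iff_of_fst_eq_one [Nontrivial A] {v x : ZDV (A × R)} (hv : v.1.1 = 1) :
    (zdGraph (A × R)).Adj v x ↔ x.1.1 = 0 ∧ v.1.2 * x.1.2 = 0 := by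
  have hne : x.1.1 = 0 → v ≠ x := by
    rintro hx rfl
    exact one_ne_zero (hv.symm.trans hx)
  simp only [zdGraph, Prod.ext_iff, Prod.fst_mul, Prod.snd_mul, Prod.fst_zero, Prod.snd_zero, hv,
    one_mul]
  exact ⟨And.right, fun h ↦ ⟨hne h.1, h⟩⟩

lemma exists_zdv_eq_zero_prod [Nontrivial A] {r : R} (hr : r ≠ 0) :
    ∃ x : ZDV (A × R), x.1 = (0, r) :=
  ⟨⟨(0, r), by simpa using hr, (1, 0), by simp, by simp⟩, rfl⟩

lemma exists_zdv_eq_one_prod [Nontrivial A] {y z : R} (hz : z ≠ 0) (hyz : y * z = 0) :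
    ∃ v : ZDV (A × R), v.1 = (1, y) :=
  ⟨⟨(1, y), by simp, (0, z), by simpa using hz, by simpa using hyz⟩, rfl⟩

lemma mem_pendantSet_zdGraph {a x : ZDV (ZMod 2 × R)} (ha : a.1 = (1, 0)) (hx : x.1.1 = 0)
    (hxR : x.1.2 ∉ zeroDivisorSet R) : x ∈ pendantSet (zdGraph (ZMod 2 × R)) a := by
  refine Set.Subset.antisymm (fun w hw ↦ ?_) (Set.singleton_subset_iff.2 ?_)
  · have hw₂ : w.1.2 = 0 := by
      by_contra hne
      exact hxR ⟨w.1.2, hne, congrArg Prod.snd hw.2⟩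
    have hw₁ : w.1.1 = 1 := Fin.eq_one_of_ne_zero _ fun h ↦ w.2.1 (Prod.ext h hw₂)
    exact Subtype.ext (ha ▸ Prod.ext hw₁ hw₂)
  · refine ((zdGraph_adj_iff_of_fst_eq_one (by rw [ha])).2 ⟨hx, ?_⟩).symm
    rw [ha, zero_mul]

lemma ncard_diff_pendantSet_zdGraph_le [Finite R] {a : ZDV (ZMod 2 × R)} (ha : a.1 = (1, 0)) :
    ((zdGraph (ZMod 2 × R)).neighborSet a \ pendantSet (zdGraph (ZMod 2 × R)) a).ncard ≤
      (zeroDivisorSet R \ {0}).ncard := by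
  have fst_eq_zero {x : ZDV (ZMod 2 × R)} (hx : (zdGraph (ZMod 2 × R)).Adj a x) : x.1.1 = 0 :=
    ((zdGraph_adj_iff_of_fst_eq_one (by rw [ha])).1 hx).1
  refine Set.ncard_le_ncard_of_injOn (fun x ↦ x.1.2) ?_ ?_
  · rintro x ⟨hax, hx⟩
    refine ⟨?_, fun h ↦ x.2.1 (Prod.ext (fst_eq_zero hax) h)⟩
    by_contra hxR
    exact hx (mem_pendantSet_zdGraph ha (fst_eq_zero hax) hxR)
  · intro x hx x' hx' h
    exact Subtype.ext (Prod.ext ((fst_eq_zero hx.1).trans (fst_eq_zero hx'.1).symm) h)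

lemma ncard_compl_zeroDivisorSet_le_ncard_pendantSet [Nontrivial R] [Finite R] {a : ZDV (ZMod 2 × R)}
    (ha : a.1 = (1, 0)) :
    (zeroDivisorSet R)ᶜ.ncard ≤ (pendantSet (zdGraph (ZMod 2 × R)) a).ncard := by
  have hsub : (zeroDivisorSet R)ᶜ ⊆
      (fun x : ZDV (ZMod 2 × R) ↦ x.1.2) '' pendantSet (zdGraph (ZMod 2 × R)) a := by
    intro r hr
    have hr0 : r ≠ 0 := by
      rintro rfl
      exact hr ⟨1, one_ne_zero, zero_mul 1⟩
    obtain ⟨x, hx⟩ := exists_zdv_eq_zero_prod (A := ZMod 2) hr0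
    exact ⟨x, mem_pendantSet_zdGraph ha (by rw [hx]) (by rwa [hx]), by simp only [hx]⟩
  exact (Set.ncard_le_ncard hsub).trans Set.ncard_image_le

lemma ncard_annihilator_le_ncard_neighborSet [Nontrivial A] [Finite A] [Finite R]
    {v : ZDV (A × R)} (hv : v.1.1 = 1) :
    {z | z ≠ 0 ∧ v.1.2 * z = 0}.ncard ≤ ((zdGraph (A × R)).neighborSet v).ncard := by
  have hsub : {z | z ≠ 0 ∧ v.1.2 * z = 0} ⊆
      (fun x : ZDV (A × R) ↦ x.1.2) '' (zdGraph (A × R)).neighborSet v := by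
    rintro z ⟨hz, hvz⟩
    obtain ⟨x, hx⟩ := exists_zdv_eq_zero_prod (A := A) hz
    exact ⟨x, (zdGraph_adj_iff_of_fst_eq_one hv).2 ⟨by rw [hx], by rwa [hx]⟩, by simp only [hx]⟩
  exact (Set.ncard_le_ncard hsub).trans Set.ncard_image_le

theorem psiG_zdGraph_zmod_two_prod [Finite R]
    (hcard : (zeroDivisorSet R \ {0}).ncard ≤ (zeroDivisorSet R)ᶜ.ncard) {y : R} (hy : y ≠ 0)
    (hann : 2 ≤ {z | z ≠ 0 ∧ y * z = 0}.ncard) : psiG (zdGraph (ZMod 2 × R)) = 1 := by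
  have : Nontrivial R := nontrivial_of_ne y 0 hy
  obtain ⟨z, hz, hyz⟩ := Set.nonempty_of_ncard_ne_zero (two_pos.trans_le hann).ne'
  obtain ⟨a, ha⟩ := exists_zdv_eq_one_prod (A := ZMod 2) (one_ne_zero (α := R)) (zero_mul 1)
  obtain ⟨v, hv⟩ := exists_zdv_eq_one_prod (A := ZMod 2) hz hyz
  have ha₁ : a.1.1 = 1 := by rw [ha]
  have hv₁ : v.1.1 = 1 := by rw [hv]
  refine psiG_eq_one_of_ncard_le_ncard_pendantSet (a := a) (v := v) (Set.toFinite _) ?_ ?_ ?_ ?_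
  · calc
      _ ≤ (zeroDivisorSet R \ {0}).ncard := ncard_diff_pendantSet_zdGraph_le ha
      _ ≤ (zeroDivisorSet R)ᶜ.ncard := hcard
      _ ≤ _ := ncard_compl_zeroDivisorSet_le_ncard_pendantSet ha
  · rintro rfl
    exact hy (congrArg Prod.snd (hv.symm.trans ha))
  · intro x hx
    have hx₁ : x.1.1 = 0 := ((zdGraph_adj_iff_of_fst_eq_one hv₁).1 hx).1
    exact (zdGraph_adj_iff_of_fst_eq_one ha₁).2 ⟨hx₁, by rw [ha, zero_mul]⟩
  · exact le_trans (by rwa [hv]) (ncard_annihilator_le_ncard_neighborSet hv₁)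

end ZeroDivisorGraph

section Prod

lemma ncard_annihilator_one_zero {A R : Type*} [CommRing A] [CommRing R] [Finite R] :
    {z : A × R | z ≠ 0 ∧ (1, 0) * z = 0}.ncard = Nat.card R - 1 := by
  have haxis : {z : A × R | z ≠ 0 ∧ (1, 0) * z = 0} = {0} ×ˢ {0}ᶜ := by
    ext ⟨x, y⟩
    simp only [ne_eq, Set.mem_ofPred_eq, Prod.mk_eq_zero, Prod.mk_mul_mk, one_mul, zero_mul,
      Set.mem_prod, Set.mem_singleton_iff, Set.mem_compl_iff]
    tauto
  rw [haxis, Set.ncard_prod, Set.ncard_singleton, one_mul, Set.ncard_compl, Set.ncard_singleton]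

variable {K L : Type*} [CommRing K] [IsDomain K] [CommRing L] [IsDomain L]

lemma mem_zeroDivisorSet_prod {x : K × L} : x ∈ zeroDivisorSet (K × L) ↔ x.1 = 0 ∨ x.2 = 0 := by
  constructor
  · rintro ⟨y, hy, hxy⟩
    by_contra! hx
    have hy₁ : y.1 = 0 := (mul_eq_zero.1 (congrArg Prod.fst hxy)).resolve_left hx.1
    have hy₂ : y.2 = 0 := (mul_eq_zero.1 (congrArg Prod.snd hxy)).resolve_left hx.2
    exact hy (Prod.ext hy₁ hy₂)
  · rintro (h | h)
    · exact ⟨(1, 0), by simp, Prod.ext (by simp [h]) (by simp)⟩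
    · exact ⟨(0, 1), by simp, Prod.ext (by simp) (by simp [h])⟩

lemma ncard_compl_zeroDivisorSet_prod [Finite K] [Finite L] :
    (zeroDivisorSet (K × L))ᶜ.ncard = (Nat.card K - 1) * (Nat.card L - 1) := by
  have hprod : (zeroDivisorSet (K × L))ᶜ = {0}ᶜ ×ˢ {0}ᶜ := by
    ext x
    simp [mem_zeroDivisorSet_prod]
  rw [hprod, Set.ncard_prod, Set.ncard_compl, Set.ncard_compl, Set.ncard_singleton,
    Set.ncard_singleton]

lemma ncard_zeroDivisorSet_prod_diff_le [Finite K] [Finite L] :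
    (zeroDivisorSet (K × L) \ {0}).ncard ≤ (Nat.card K - 1) + (Nat.card L - 1) := by
  have haxes : zeroDivisorSet (K × L) \ {0} ⊆ {0}ᶜ ×ˢ {0} ∪ {0} ×ˢ {0}ᶜ := by
    rintro ⟨x, y⟩
    simp only [Set.mem_sdiff, mem_zeroDivisorSet_prod, Set.mem_union, Set.mem_prod,
      Set.mem_compl_iff, Set.mem_singleton_iff, Prod.mk_eq_zero]
    tauto
  refine (Set.ncard_le_ncard haxes).trans ((Set.ncard_union_le _ _).trans_eq ?_)
  rw [Set.ncard_prod, Set.ncard_prod, Set.ncard_singleton, Set.ncard_singleton, mul_one, one_mul,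
    Set.ncard_compl, Set.ncard_compl, Set.ncard_singleton, Set.ncard_singleton]

end Prod

theorem stmt15_general {K L : Type*} [Field K] [Field L] [Finite K] [Finite L]
    (hK : 3 ≤ Nat.card K) (hL : 3 ≤ Nat.card L) :
    psiG (zdGraph (ZMod 2 × K × L)) = 1 ∧ ¬ PartitionableGDA (zdGraph (ZMod 2 × K × L)) := by
  have hcard : (zeroDivisorSet (K × L) \ {0}).ncard ≤ (zeroDivisorSet (K × L))ᶜ.ncard :=
    calc
      _ ≤ (Nat.card K - 1) + (Nat.card L - 1) := ncard_zeroDivisorSet_prod_diff_le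
      _ ≤ (Nat.card K - 1) * (Nat.card L - 1) := Nat.add_le_mul (by omega) (by omega)
      _ = _ := ncard_compl_zeroDivisorSet_prod.symm
  have hann : 2 ≤ {z : K × L | z ≠ 0 ∧ (1, 0) * z = 0}.ncard := by
    rw [ncard_annihilator_one_zero]
    omega
  have hpsi : psiG (zdGraph (ZMod 2 × K × L)) = 1 :=
    psiG_zdGraph_zmod_two_prod hcard (y := (1, 0)) (by simp) hann
  exact ⟨hpsi, not_partitionableGDA_of_psiG_eq_one hpsi⟩

/-- For primes `p, q ≥ 3`, `ψ_g(Γ(ℤ₂ × ℤ_p × ℤ_q)) = 1`, i.e. the graph is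
not partitionable into global defensive alliances. -/
theorem stmt15 (p q : ℕ) (hp : p.Prime) (hq : q.Prime) (hp3 : 3 ≤ p) (hq3 : 3 ≤ q) :
    psiG (zdGraph (ZMod 2 × ZMod p × ZMod q)) = 1 ∧
    ¬ PartitionableGDA (zdGraph (ZMod 2 × ZMod p × ZMod q)) := by
  have : Fact p.Prime := ⟨hp⟩
  have : Fact q.Prime := ⟨hq⟩
  exact stmt15_general (by simpa using hp3) (by simpa using hq3)
end
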